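/- arXiv:1304.6059 — 2 statements merged into one kernel-verified Lean document; each statement's English description precedes it below -/
import Mathlib

section
/- Let φ = f ∘ s⁻¹ : A → B and ψ = g ∘ t⁻¹ : B → C be morphisms in K^b(A)/𝔻, where A, B, C are objects of A, the domains L of s and T of t are complexes concentrated in degrees 0 and 1, f ∈ K^b(A)(L, B), g ∈ K^b(A)(T, C), and the cones of s : L → A and t : T → B lie in 𝔻. Let LT be the complex with LT⁰ = L⁰ ⊕ T⁰, LT¹ = L¹ ⊕ T¹ ⊕ B, and differential given by the matrix with rows (d⁰_L, 0), (0, d⁰_T), (f⁰, −t⁰). Then for the morphisms q ∈ K^b(A)(LT, A) with degree-0 component (s⁰, 0) and r ∈ K^b(A)(LT, C) with degree-0 component (0, g⁰), the cone of q lies in 𝔻 and ψ ∘ φ = r ∘ q⁻¹ in K^b(A)/𝔻. -/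
open CategoryTheory Limits Pretriangulated ZeroObject

universe v u v' u'

section TriangulatedPrelude

variable {C : Type u} [Category.{v} C] [HasZeroObject C] [HasShift C ℤ] [Preadditive C]
  [∀ n : ℤ, (shiftFunctor C n).Additive] [Pretriangulated C]

/-- The objects of the smallest strict full triangulated subcategory of `C`
containing the set of objects `B`. -/
inductive genSub (B : Set C) : C → Prop
  | of (X : C) (hX : X ∈ B) : genSub B X
  | zero (X : C) (hX : IsZero X) : genSub B X
  | shift (X : C) (n : ℤ) (hX : genSub B X) : genSub B (X⟦n⟧)
  | ext₂ (T : Triangle C) (hT : T ∈ distTriang C) (h₁ : genSub B T.obj₁)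
      (h₃ : genSub B T.obj₃) : genSub B T.obj₂

/-- The triangulated subcategory of `C` generated by `B`. -/
def genSubcat (B : Set C) : ObjectProperty C :=
  genSub B

instance (B : Set C) : (genSubcat B).IsTriangulated where
  exists_zero := ⟨0, isZero_zero _, genSub.zero _ (isZero_zero _)⟩
  isStableUnderShiftBy n := ⟨fun X h => genSub.shift X n h⟩
  ext₂' T hT h₁ h₃ := ObjectProperty.le_isoClosure _ _ (genSub.ext₂ T hT h₁ h₃)

/-- The extension-closure of a class of objects `E`: the smallest class containing `E`
and `0` and such that for any distinguished triangle `X ⟶ Y ⟶ Z` with `X, Z` in the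
class, `Y` is also in the class. -/
inductive extClosure (E : Set C) : C → Prop
  | of (X : C) (hX : X ∈ E) : extClosure E X
  | zero (X : C) (hX : IsZero X) : extClosure E X
  | ext₂ (T : Triangle C) (hT : T ∈ distTriang C) (h₁ : extClosure E T.obj₁)
      (h₃ : extClosure E T.obj₃) : extClosure E T.obj₂

/-- `D_{[i,j]}`: the extension-closure of `∪_{i ≤ l ≤ j} D[l]`. -/
def shiftClosure (D : Set C) (i j : ℤ) : Set C :=
  extClosure {X | ∃ (Y : C) (l : ℤ), i ≤ l ∧ l ≤ j ∧ Y ∈ D ∧ X = Y⟦l⟧}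

/-- `D_{≥ i} = ∪_{k ≥ i} D_{[i,k]}`. -/
def shiftClosureGE (D : Set C) (i : ℤ) : Set C := {X | ∃ k, i ≤ k ∧ X ∈ shiftClosure D i k}

/-- `D_{≤ j} = ∪_{k ≤ j} D_{[k,j]}`. -/
def shiftClosureLE (D : Set C) (j : ℤ) : Set C := {X | ∃ k, k ≤ j ∧ X ∈ shiftClosure D k j}

/-- A set of objects `D` is weakly negative if `0 ∈ D` and `Hom(X, Y[i]) = 0`
for all `X, Y ∈ D` and all `i ≥ 2`. -/
def WeaklyNegative (D : Set C) : Prop :=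
  (0 : C) ∈ D ∧ ∀ X ∈ D, ∀ Y ∈ D, ∀ i : ℤ, 2 ≤ i → ∀ f : X ⟶ (Y⟦i⟧), f = 0

end TriangulatedPrelude

attribute [local instance] Limits.hasBinaryBiproducts_of_finite_biproducts

section KPrelude

variable {A : Type u} [Category.{v} A] [Preadditive A] [HasZeroObject A] [HasFiniteBiproducts A]

/-- The two-term cochain complex with `P` in degree `n` and `Q` in degree `n + 1`,
with differential given by `f : P ⟶ Q` (and all other terms `0`).
In particular, `twoComplex (-1) f` is the cone of a morphism `f` of `A`. -/
noncomputable def twoComplex (n : ℤ) {P Q : A} (f : P ⟶ Q) : CochainComplex A ℤ where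
  X i := if i = n then P else if i = n + 1 then Q else 0
  d i j :=
    if hij : i = n ∧ j = n + 1 then
      eqToHom (by simp [hij.1]) ≫ f ≫
        eqToHom (by simp [hij.2, show ¬ ((n : ℤ) + 1 = n) by omega])
    else 0
  shape i j hij := by
    rw [dif_neg]
    rintro ⟨rfl, rfl⟩
    exact hij rfl
  d_comp_d' i j k _ _ := by
    by_cases h1 : i = n ∧ j = n + 1
    · by_cases h2 : j = n ∧ k = n + 1
      · obtain ⟨h1a, h1b⟩ := h1; obtain ⟨h2a, h2b⟩ := h2; omega
      · rw [dif_neg h2, comp_zero]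
    · rw [dif_neg h1, zero_comp]

/-- The chain map from the two-term complex (in degrees `n`, `n + 1`) determined by
`f : P ⟶ Q` to the complex concentrated in degree `n` with value `M`, whose degree `n`
component is `g : P ⟶ M`. -/
noncomputable def twoComplexToSingle (n : ℤ) {P Q M : A} (f : P ⟶ Q) (g : P ⟶ M) :
    twoComplex n f ⟶ (HomologicalComplex.single A (ComplexShape.up ℤ) n).obj M where
  f i :=
    if h : i = n then
      eqToHom (by simp [twoComplex, h]) ≫ g ≫
        (HomologicalComplex.singleObjXSelf (ComplexShape.up ℤ) n M).inv ≫ eqToHom (by rw [h])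
    else 0
  comm' i j hij := by
    simp only [ComplexShape.up_Rel] at hij
    by_cases hj : j = n
    · have hi : ¬ (i = n ∧ j = n + 1) := by rintro ⟨rfl, rfl⟩; omega
      have hd : (twoComplex n f).d i j = 0 := by
        dsimp [twoComplex]; rw [dif_neg hi]; rfl
      rw [hd, zero_comp]
      have : i ≠ n := by omega
      rw [dif_neg this, zero_comp]
    · rw [dif_neg hj]
      rw [comp_zero]
      have : ((HomologicalComplex.single A (ComplexShape.up ℤ) n).obj M).d i j = 0 := by simp
      rw [this, comp_zero]

/-- The quotient functor `C^b(A) ⥤ K(A)` (restricted from all complexes). -/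
noncomputable abbrev homotopyQ : CochainComplex A ℤ ⥤ HomotopyCategory A (ComplexShape.up ℤ) :=
  HomotopyCategory.quotient A (ComplexShape.up ℤ)

/-- The canonical embedding of `A` into the homotopy category, as complexes concentrated
in degree `0`. -/
noncomputable abbrev iotaA : A ⥤ HomotopyCategory A (ComplexShape.up ℤ) :=
  HomologicalComplex.single A (ComplexShape.up ℤ) 0 ⋙ homotopyQ

/-- `B`: the set of cones of elements of `S`, viewed in the homotopy category. -/
def coneSet (S : MorphismProperty A) : Set (HomotopyCategory A (ComplexShape.up ℤ)) :=
  {X | ∃ (P Q : A) (s : P ⟶ Q), S s ∧ X = homotopyQ.obj (twoComplex (-1) s)}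

/-- The Verdier localization functor of the homotopy category by the triangulated
subcategory `𝔻` generated by the cones of elements of `S`. -/
noncomputable abbrev locQ (S : MorphismProperty A) :
    HomotopyCategory A (ComplexShape.up ℤ) ⥤ (genSubcat (coneSet S)).trW.Localization :=
  (genSubcat (coneSet S)).trW.Q

/-- The composite functor `A ⥤ K(A) ⥤ K(A)/𝔻`. -/
noncomputable abbrev uBig (S : MorphismProperty A) :
    A ⥤ (genSubcat (coneSet S)).trW.Localization :=
  iotaA ⋙ locQ S

/-- `A[S⁻¹]_add`: the full subcategory of the Verdier quotient whose
objects are those of `A` (viewed as complexes concentrated in degree `0`). -/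
def AddLoc (S : MorphismProperty A) : Type u := A

noncomputable instance (S : MorphismProperty A) : Category (AddLoc S) where
  Hom X Y := (uBig S).obj X ⟶ (uBig S).obj Y
  id X := 𝟙 ((uBig S).obj X)
  comp f g := CategoryStruct.comp (obj := (genSubcat (coneSet S)).trW.Localization) f g

/-- The canonical functor `u : A ⥤ A[S⁻¹]_add` induced by the localization functor. -/
noncomputable def uFun (S : MorphismProperty A) : A ⥤ AddLoc S where
  obj X := X
  map f := (uBig S).map f
  map_id X := (uBig S).map_id X
  map_comp f g := (uBig S).map_comp f g

noncomputable instance (S : MorphismProperty A) : Preadditive (AddLoc S) where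
  homGroup X Y := inferInstanceAs (AddCommGroup ((uBig S).obj X ⟶ (uBig S).obj Y))
  add_comp P Q R f f' g :=
    @Preadditive.add_comp _ _ _ ((uBig S).obj P) ((uBig S).obj Q) ((uBig S).obj R) f f' g
  comp_add P Q R f g g' :=
    @Preadditive.comp_add _ _ _ ((uBig S).obj P) ((uBig S).obj Q) ((uBig S).obj R) f g g'

end KPrelude

/-- The differential of the complex `LT`: the matrix morphism
`L⁰ ⊕ T⁰ ⟶ L¹ ⊕ T¹ ⊕ B` with rows `(d⁰_L, 0)`, `(0, d⁰_T)`, `(f⁰, −t⁰)`. -/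
noncomputable def matrixLT {A : Type u} [Category.{v} A] [Preadditive A] [HasZeroObject A]
    [HasFiniteBiproducts A]
    {L₀ L₁ T₀ T₁ B₀ : A} (dL : L₀ ⟶ L₁) (dT : T₀ ⟶ T₁) (f₀ : L₀ ⟶ B₀) (t₀ : T₀ ⟶ B₀) :
    (L₀ ⊞ T₀ : A) ⟶ (L₁ ⊞ (T₁ ⊞ B₀) : A) :=
  biprod.desc (biprod.lift dL (biprod.lift 0 f₀))
    (biprod.lift 0 (biprod.lift dT (-t₀)))

section Helpers

set_option linter.unusedSectionVars false

variable {A : Type u} [Category.{v} A] [Preadditive A] [HasZeroObject A] [HasFiniteBiproducts A]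

noncomputable def twoXz (n : ℤ) {P Q : A} (f : P ⟶ Q) (i : ℤ) (h : i = n) :
    (twoComplex n f).X i ≅ P := eqToIso (by simp [twoComplex, h])

noncomputable def twoXo (n : ℤ) {P Q : A} (f : P ⟶ Q) (i : ℤ) (h : i = n + 1) :
    (twoComplex n f).X i ≅ Q := eqToIso (by simp [twoComplex, h])

lemma twoX_isZero (n : ℤ) {P Q : A} (f : P ⟶ Q) (i : ℤ) (h : i ≠ n) (h' : i ≠ n + 1) :
    IsZero ((twoComplex n f).X i) := by
  have : (twoComplex n f).X i = 0 := by simp [twoComplex, h, h']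
  rw [this]; exact isZero_zero A

lemma two_d (n : ℤ) {P Q : A} (f : P ⟶ Q) (i j : ℤ) (h : i = n) (h' : j = n + 1) :
    (twoComplex n f).d i j = (twoXz n f i h).hom ≫ f ≫ (twoXo n f j h').inv := by
  dsimp [twoComplex]
  rw [dif_pos ⟨h, h'⟩]; rfl

lemma two_d_zero (n : ℤ) {P Q : A} (f : P ⟶ Q) (i j : ℤ) (h : ¬ (i = n ∧ j = n + 1)) :
    (twoComplex n f).d i j = 0 := by
  dsimp [twoComplex]
  rw [dif_neg h]; rfl

lemma toSingle_f (n : ℤ) {P Q M : A} (f : P ⟶ Q) (g : P ⟶ M) :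
    (twoComplexToSingle n f g).f n = (twoXz n f n rfl).hom ≫ g ≫
        (HomologicalComplex.singleObjXSelf (ComplexShape.up ℤ) n M).inv := by
  dsimp [twoComplexToSingle]
  rw [dif_pos rfl]
  simp [twoXz]

/-- Degreewise maps of two-term graded objects. -/
noncomputable def twoF (n : ℤ) {P Q P' Q' : A} (d : P ⟶ Q) (d' : P' ⟶ Q')
    (a : P ⟶ P') (b : Q ⟶ Q') (i : ℤ) : (twoComplex n d).X i ⟶ (twoComplex n d').X i :=
  if h : i = n then (twoXz n d i h).hom ≫ a ≫ (twoXz n d' i h).inv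
  else if h : i = n + 1 then (twoXo n d i h).hom ≫ b ≫ (twoXo n d' i h).inv
  else 0

section
variable (n : ℤ) {P Q P' Q' P'' Q'' : A} (d : P ⟶ Q) (d' : P' ⟶ Q') (d'' : P'' ⟶ Q'')

lemma twoF_z (a : P ⟶ P') (b : Q ⟶ Q') (i : ℤ) (h : i = n) :
    twoF n d d' a b i = (twoXz n d i h).hom ≫ a ≫ (twoXz n d' i h).inv := dif_pos h

lemma twoF_o (a : P ⟶ P') (b : Q ⟶ Q') (i : ℤ) (h : i = n + 1) :
    twoF n d d' a b i = (twoXo n d i h).hom ≫ b ≫ (twoXo n d' i h).inv := by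
  unfold twoF; rw [dif_neg (by omega), dif_pos h]

lemma twoF_comp (a : P ⟶ P') (b : Q ⟶ Q') (a' : P' ⟶ P'') (b' : Q' ⟶ Q'') (i : ℤ) :
    twoF n d d' a b i ≫ twoF n d' d'' a' b' i = twoF n d d'' (a ≫ a') (b ≫ b') i := by
  unfold twoF; split_ifs <;> simp

lemma twoF_add (a a' : P ⟶ P') (b b' : Q ⟶ Q') (i : ℤ) :
    twoF n d d' a b i + twoF n d d' a' b' i = twoF n d d' (a + a') (b + b') i := by
  unfold twoF; split_ifs <;> simp

lemma twoF_id (i : ℤ) : twoF n d d (𝟙 _) (𝟙 _) i = 𝟙 _ := by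
  by_cases h : i = n
  · simp [twoF_z n d d _ _ i h]
  by_cases h' : i = n + 1
  · simp [twoF_o n d d _ _ i h']
  exact (twoX_isZero n d i h h').eq_of_src _ _

lemma twoF_zero (i : ℤ) : twoF n d d' 0 0 i = 0 := by
  unfold twoF; split_ifs <;> simp

/-- Maps of two-term complexes. -/
noncomputable def twoMap (a : P ⟶ P') (b : Q ⟶ Q') (w : a ≫ d' = d ≫ b) :
    twoComplex n d ⟶ twoComplex n d' where
  f i := twoF n d d' a b i
  comm' i j hij := by
    simp only [ComplexShape.up_Rel] at hij
    by_cases h : i = n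
    · have h' : j = n + 1 := by omega
      rw [two_d n d' i j h h', two_d n d i j h h', twoF_z n d d' a b i h, twoF_o n d d' a b j h']
      simp [reassoc_of% w]
    · rw [two_d_zero n d' i j (fun h' => h h'.1), two_d_zero n d i j (fun h' => h h'.1)]
      simp

lemma twoMap_toSingle {M : A} (a : P ⟶ P') (b : Q ⟶ Q') (w : a ≫ d' = d ≫ b) (g : P' ⟶ M) :
    twoMap n d d' a b w ≫ twoComplexToSingle n d' g = twoComplexToSingle n d (a ≫ g) := by
  apply HomologicalComplex.to_single_hom_ext
  rw [HomologicalComplex.comp_f, toSingle_f, toSingle_f]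
  dsimp [twoMap]
  rw [twoF_z n d d' a b n rfl]
  simp

/-- The short complex of two-term complexes. -/
noncomputable abbrev twoSC (a : P ⟶ P') (b : Q ⟶ Q') (w : a ≫ d' = d ≫ b)
    (a' : P' ⟶ P'') (b' : Q' ⟶ Q'') (w' : a' ≫ d'' = d' ≫ b')
    (ha : a ≫ a' = 0) (hb : b ≫ b' = 0) : ShortComplex (CochainComplex A ℤ) :=
  ShortComplex.mk (twoMap n d d' a b w) (twoMap n d' d'' a' b' w') (by
    ext i
    dsimp [twoMap]
    rw [twoF_comp, ha, hb, twoF_zero])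

noncomputable def twoSplit (a : P ⟶ P') (b : Q ⟶ Q') (w : a ≫ d' = d ≫ b)
    (a' : P' ⟶ P'') (b' : Q' ⟶ Q'') (w' : a' ≫ d'' = d' ≫ b')
    (ha : a ≫ a' = 0) (hb : b ≫ b' = 0)
    (r : P' ⟶ P) (s : P'' ⟶ P') (r' : Q' ⟶ Q) (s' : Q'' ⟶ Q')
    (h₁ : a ≫ r = 𝟙 _) (h₂ : s ≫ a' = 𝟙 _) (h₃ : r ≫ a + a' ≫ s = 𝟙 _)
    (k₁ : b ≫ r' = 𝟙 _) (k₂ : s' ≫ b' = 𝟙 _) (k₃ : r' ≫ b + b' ≫ s' = 𝟙 _) (i : ℤ) :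
    ((twoSC n d d' d'' a b w a' b' w' ha hb).map
      (HomologicalComplex.eval A (ComplexShape.up ℤ) i)).Splitting where
  r := twoF n d' d r r' i
  s := twoF n d'' d' s s' i
  f_r := by
    have : twoF n d d' a b i ≫ twoF n d' d r r' i = 𝟙 _ := by
      rw [twoF_comp, h₁, k₁, twoF_id]
    exact this
  s_g := by
    have : twoF n d'' d' s s' i ≫ twoF n d' d'' a' b' i = 𝟙 _ := by
      rw [twoF_comp, h₂, k₂, twoF_id]
    exact this
  id := by
    have : twoF n d' d r r' i ≫ twoF n d d' a b i +
        twoF n d' d'' a' b' i ≫ twoF n d'' d' s s' i = 𝟙 _ := by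
      rw [twoF_comp, twoF_comp, twoF_add, h₃, k₃, twoF_id]
    exact this

end

instance genSubcat_iso {C : Type u} [Category.{v} C] [HasZeroObject C] [HasShift C ℤ]
    [Preadditive C] [∀ n : ℤ, (shiftFunctor C n).Additive] [Pretriangulated C] (B : Set C) :
    (genSubcat B).IsClosedUnderIsomorphisms where
  of_iso {X Y} e hX := by
    refine genSub.ext₂ (Triangle.mk e.hom (0 : Y ⟶ 0) 0) ?_ hX
      (genSub.zero _ (isZero_zero _))
    exact isomorphic_distinguished _ (contractible_distinguished X) _
      (Triangle.isoMk _ _ (Iso.refl _) e.symm (Iso.refl _) 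
        (by change e.hom ≫ e.inv = 𝟙 X ≫ 𝟙 X; simp)
        (by change (0 : Y ⟶ 0) ≫ 𝟙 _ = e.inv ≫ 0; simp)
        (by change (0 : (0 : C) ⟶ X⟦(1 : ℤ)⟧) ≫ (𝟙 X)⟦(1 : ℤ)⟧' = 𝟙 _ ≫ 0; simp))

lemma split_dist (T : ShortComplex (CochainComplex A ℤ))
    (σ : ∀ n, (T.map (HomologicalComplex.eval A (ComplexShape.up ℤ) n)).Splitting) :
    CochainComplex.trianglehOfDegreewiseSplit T σ ∈
      distTriang (HomotopyCategory A (ComplexShape.up ℤ)) := by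
  rw [HomotopyCategory.distinguished_iff_iso_trianglehOfDegreewiseSplit]
  exact ⟨T, σ, ⟨Iso.refl _⟩⟩

/-- the complex with `M` in degree one, shifted, is `M` in degree zero. -/
noncomputable def shiftToSingle (M : A) :
    (twoComplex 0 (0 : (0 : A) ⟶ M))⟦(1 : ℤ)⟧ ⟶
      (HomologicalComplex.single A (ComplexShape.up ℤ) 0).obj M :=
  HomologicalComplex.mkHomToSingle
    (show ((twoComplex 0 (0 : (0 : A) ⟶ M))⟦(1 : ℤ)⟧).X 0 ⟶ M from
      (twoXo 0 (0 : (0 : A) ⟶ M) (0 + 1) rfl).hom) (by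
    intro i hi
    simp only [ComplexShape.up_Rel] at hi
    have : IsZero (((twoComplex 0 (0 : (0 : A) ⟶ M))⟦(1 : ℤ)⟧).X i) :=
      (isZero_zero A).of_iso (twoXz 0 (0 : (0 : A) ⟶ M) (i + 1) hi)
    exact this.eq_of_src _ _)

lemma shiftToSingle_f (M : A) : (shiftToSingle M).f 0 =
    (show (twoComplex 0 (0 : (0 : A) ⟶ M)).X (0 + 1) ⟶
      ((HomologicalComplex.single A (ComplexShape.up ℤ) 0).obj M).X 0 from
    (twoXo 0 (0 : (0 : A) ⟶ M) (0 + 1) rfl).hom ≫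
      (HomologicalComplex.singleObjXSelf (ComplexShape.up ℤ) 0 M).inv) :=
  HomologicalComplex.mkHomToSingle_f _ _

instance (M : A) : IsIso (shiftToSingle M) := by
  have : ∀ i, IsIso ((shiftToSingle M).f i) := by
    intro i
    by_cases hi : i = 0
    · subst hi
      have : IsIso ((twoXo 0 (0 : (0 : A) ⟶ M) (0 + 1) rfl).hom ≫
        (HomologicalComplex.singleObjXSelf (ComplexShape.up ℤ) 0 M).inv) := inferInstance
      rw [shiftToSingle_f]
      exact this
    · have h1 : IsZero (((HomologicalComplex.single A (ComplexShape.up ℤ) 0).obj M).X i) :=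
        HomologicalComplex.isZero_single_obj_X _ _ _ _ hi
      have h2 : IsZero (((twoComplex 0 (0 : (0 : A) ⟶ M))⟦(1 : ℤ)⟧).X i) := by
        by_cases h : i + 1 = 0
        · exact (isZero_zero A).of_iso (twoXz 0 (0 : (0 : A) ⟶ M) (i + 1) h)
        · exact twoX_isZero 0 (0 : (0 : A) ⟶ M) (i + 1) h (by omega)
      exact ⟨0, h2.eq_of_src _ _, h1.eq_of_src _ _⟩
  exact HomologicalComplex.Hom.isIso_of_components _

/-- The shifted cone of `t` lies in the subcategory. -/
lemma cone_mem (D : ObjectProperty (HomotopyCategory A (ComplexShape.up ℤ))) [D.IsTriangulated]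
    [D.IsClosedUnderIsomorphisms] {T₀ T₁ B₀ : A} (dT : T₀ ⟶ T₁) (t₀ : T₀ ⟶ B₀)
    (ht : D.trW (homotopyQ.map (twoComplexToSingle 0 dT t₀))) :
    D (homotopyQ.obj (twoComplex 0 (biprod.lift dT (-t₀)))) := by
  let σ := twoSplit 0 (0 : (0 : A) ⟶ B₀) (biprod.lift dT (-t₀)) dT 0 biprod.inr (by simp)
    (𝟙 _) biprod.fst (by simp) (by simp) (by simp) 0 (𝟙 _) biprod.snd biprod.inl
    ((isZero_zero A).eq_of_src _ _) (by simp) (by simp) (by simp) (by simp)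
    (by rw [add_comm]; exact biprod.total)
  have hd := split_dist _ σ
  let δ : twoComplex 0 dT ⟶ (twoComplex 0 (0 : (0 : A) ⟶ B₀))⟦(1 : ℤ)⟧ :=
    CochainComplex.homOfDegreewiseSplit _ σ
  have hδ : δ.f 0 = (twoF 0 dT (biprod.lift dT (-t₀)) (𝟙 _) biprod.inl 0 ≫
        (twoComplex 0 (biprod.lift dT (-t₀))).d 0 (0 + 1) ≫
        twoF 0 (biprod.lift dT (-t₀)) (0 : (0 : A) ⟶ B₀) 0 biprod.snd (0 + 1)) :=
    CochainComplex.homOfDegreewiseSplit_f _ σ 0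
  have key : δ ≫ shiftToSingle B₀ =
      (-1 : ℤˣ) • twoComplexToSingle 0 dT t₀ := by
    apply HomologicalComplex.to_single_hom_ext
    rw [HomologicalComplex.comp_f, hδ]
    rw [Units.neg_smul, one_smul, HomologicalComplex.neg_f_apply, toSingle_f, shiftToSingle_f]
    have : (twoF 0 dT (biprod.lift dT (-t₀)) (𝟙 _) biprod.inl 0 ≫
        (twoComplex 0 (biprod.lift dT (-t₀))).d 0 (0 + 1) ≫
        twoF 0 (biprod.lift dT (-t₀)) (0 : (0 : A) ⟶ B₀) 0 biprod.snd (0 + 1)) ≫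
        (twoXo 0 (0 : (0 : A) ⟶ B₀) (0 + 1) rfl).hom ≫
        (HomologicalComplex.singleObjXSelf (ComplexShape.up ℤ) 0 B₀).inv =
        -((twoXz 0 dT 0 rfl).hom ≫ t₀ ≫
          (HomologicalComplex.singleObjXSelf (ComplexShape.up ℤ) 0 B₀).inv) := by
      rw [two_d 0 _ _ _ rfl rfl, twoF_z 0 _ _ _ _ 0 rfl, twoF_o 0 _ _ _ _ (0+1) rfl]
      simp
    exact this
  have h3 : D.trW (homotopyQ.map δ) := by
    have : D.trW (homotopyQ.map δ ≫
        homotopyQ.map (shiftToSingle B₀)) := by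
      rw [← Functor.map_comp, key, Units.neg_smul, one_smul, Functor.map_neg]
      have := (D.smul_mem_trW_iff (homotopyQ.map (twoComplexToSingle 0 dT t₀)) (-1)).2 ht
      rwa [Units.neg_smul, one_smul] at this
    exact (MorphismProperty.cancel_right_of_respectsIso _ _ _).1 this
  have h4 : D.trW (CochainComplex.trianglehOfDegreewiseSplit _ σ).mor₃ :=
    (MorphismProperty.cancel_right_of_respectsIso _ _ _).2 h3
  exact (D.trW_iff_of_distinguished' _ (rot_of_distTriang _ hd)).1 h4

lemma projL_mem (D : ObjectProperty (HomotopyCategory A (ComplexShape.up ℤ))) [D.IsTriangulated]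
    [D.IsClosedUnderIsomorphisms] {L₀ L₁ T₀ T₁ B₀ : A} (dL : L₀ ⟶ L₁) (f₀ : L₀ ⟶ B₀)
    (dT : T₀ ⟶ T₁) (t₀ : T₀ ⟶ B₀)
    (ht : D.trW (homotopyQ.map (twoComplexToSingle 0 dT t₀)))
    (w : biprod.fst ≫ dL = matrixLT dL dT f₀ t₀ ≫ biprod.fst) :
    D.trW (homotopyQ.map (twoMap 0 (matrixLT dL dT f₀ t₀) dL biprod.fst biprod.fst w)) := by
  let σ := twoSplit 0 (biprod.lift dT (-t₀)) (matrixLT dL dT f₀ t₀) dL biprod.inr biprod.inr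
    (by ext <;> simp [matrixLT]) biprod.fst biprod.fst w (by simp) (by simp)
    biprod.snd biprod.inl biprod.snd biprod.inl (by simp) (by simp)
    (by rw [add_comm]; exact biprod.total) (by simp) (by simp)
    (by rw [add_comm]; exact biprod.total)
  have hd := split_dist _ σ
  exact (D.trW_iff_of_distinguished' _ hd).2 (cone_mem D dT t₀ ht)

lemma proj_homotopy {L₀ L₁ T₀ T₁ B₀ : A} (dL : L₀ ⟶ L₁) (f₀ : L₀ ⟶ B₀)
    (dT : T₀ ⟶ T₁) (t₀ : T₀ ⟶ B₀) :
    homotopyQ.map (twoComplexToSingle 0 (matrixLT dL dT f₀ t₀) (biprod.fst ≫ f₀)) =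
    homotopyQ.map (twoComplexToSingle 0 (matrixLT dL dT f₀ t₀) (biprod.snd ≫ t₀)) := by
  let h : ∀ i j, (ComplexShape.up ℤ).Rel j i → ((twoComplex 0 (matrixLT dL dT f₀ t₀)).X i ⟶
      ((HomologicalComplex.single A (ComplexShape.up ℤ) 0).obj B₀).X j) := fun i j hij =>
    if hj : j = 0 then (twoXo 0 (matrixLT dL dT f₀ t₀) i (by subst hj; exact hij.symm)).hom ≫
      biprod.snd ≫ biprod.snd ≫
        (HomologicalComplex.singleObjXIsoOfEq (ComplexShape.up ℤ) 0 B₀ j hj).inv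
    else 0
  apply HomotopyCategory.eq_of_homotopy
  refine Homotopy.equivSubZero.symm ?_
  refine (Homotopy.ofEq ?_).trans (Homotopy.nullHomotopy' h)
  apply HomologicalComplex.to_single_hom_ext
  rw [Homotopy.nullHomotopicMap'_f (k₂ := -1) (k₀ := 1) (k₁ := 0) (by simp) (by simp)]
  rw [HomologicalComplex.sub_f_apply, toSingle_f, toSingle_f]
  have h1 : h 0 (-1) (by simp) = 0 := dif_neg (by decide)
  have h2 : h 1 0 (by simp) = (twoXo 0 (matrixLT dL dT f₀ t₀) 1 rfl).hom ≫
      biprod.snd ≫ biprod.snd ≫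
        (HomologicalComplex.singleObjXIsoOfEq (ComplexShape.up ℤ) 0 B₀ 0 rfl).inv := dif_pos rfl
  rw [h1, h2, two_d 0 _ 0 1 rfl rfl]
  have h3 : matrixLT dL dT f₀ t₀ ≫ biprod.snd ≫ biprod.snd =
      biprod.fst ≫ f₀ - biprod.snd ≫ t₀ := by ext <;> simp [matrixLT]
  simp [reassoc_of% h3]
  rfl

end Helpers

/-- Lemma: composition of roofs `φ = f ∘ s⁻¹` and `ψ = g ∘ t⁻¹` in `K^b(A)/𝔻`, where the
domains of `s` and `t` are the two-term complexes (in degrees 0 and 1) determined by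
`dL` and `dT`: the composite `ψ ∘ φ` equals `r ∘ q⁻¹`, where `q` and `r` are the
morphisms out of the complex `LT` whose degree zero components are `(s⁰, 0)` and
`(0, g⁰)` respectively, and the cone of `q` lies in `𝔻`. -/
theorem statement9 {A : Type u} [Category.{v} A] [Preadditive A] [HasZeroObject A]
    [HasFiniteBiproducts A] (S : MorphismProperty A)
    (A₀ B₀ C₀ L₀ L₁ T₀ T₁ : A) (dL : L₀ ⟶ L₁) (dT : T₀ ⟶ T₁)
    (s₀ : L₀ ⟶ A₀) (f₀ : L₀ ⟶ B₀) (t₀ : T₀ ⟶ B₀) (g₀ : T₀ ⟶ C₀)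
    (hs : (genSubcat (coneSet S)).trW (homotopyQ.map (twoComplexToSingle 0 dL s₀)))
    (ht : (genSubcat (coneSet S)).trW (homotopyQ.map (twoComplexToSingle 0 dT t₀)))
    (φ : (uBig S).obj A₀ ⟶ (uBig S).obj B₀) (ψ : (uBig S).obj B₀ ⟶ (uBig S).obj C₀)
    (hφ : (locQ S).map (homotopyQ.map (twoComplexToSingle 0 dL s₀)) ≫ φ =
      (locQ S).map (homotopyQ.map (twoComplexToSingle 0 dL f₀)))
    (hψ : (locQ S).map (homotopyQ.map (twoComplexToSingle 0 dT t₀)) ≫ ψ =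
      (locQ S).map (homotopyQ.map (twoComplexToSingle 0 dT g₀))) :
    (genSubcat (coneSet S)).trW (homotopyQ.map
      (twoComplexToSingle 0 (matrixLT dL dT f₀ t₀) (biprod.desc s₀ 0))) ∧
    IsIso ((locQ S).map (homotopyQ.map
      (twoComplexToSingle 0 (matrixLT dL dT f₀ t₀) (biprod.desc s₀ 0)))) ∧
    (locQ S).map (homotopyQ.map
        (twoComplexToSingle 0 (matrixLT dL dT f₀ t₀) (biprod.desc s₀ 0))) ≫ (φ ≫ ψ) =
      (locQ S).map (homotopyQ.map
        (twoComplexToSingle 0 (matrixLT dL dT f₀ t₀) (biprod.desc 0 g₀))) := by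
  have wL : biprod.fst ≫ dL = matrixLT dL dT f₀ t₀ ≫ biprod.fst := by ext <;> simp [matrixLT]
  have wT : biprod.snd ≫ dT = matrixLT dL dT f₀ t₀ ≫ biprod.snd ≫ biprod.fst := by
    ext <;> simp [matrixLT]
  have eq : (biprod.desc s₀ 0 : L₀ ⊞ T₀ ⟶ A₀) = biprod.fst ≫ s₀ := by ext <;> simp
  have er : (biprod.desc 0 g₀ : L₀ ⊞ T₀ ⟶ C₀) = biprod.snd ≫ g₀ := by ext <;> simp
  have hq : (genSubcat (coneSet S)).trW (homotopyQ.map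
      (twoComplexToSingle 0 (matrixLT dL dT f₀ t₀) (biprod.desc s₀ 0))) := by
    rw [eq, ← twoMap_toSingle 0 _ dL _ _ wL, Functor.map_comp]
    exact MorphismProperty.comp_mem _ _ _ (projL_mem _ dL f₀ dT t₀ ht wL) hs
  refine ⟨hq, Localization.inverts _ _ _ hq, ?_⟩
  have e1 := proj_homotopy dL f₀ dT t₀
  rw [eq, er, ← twoMap_toSingle 0 _ dL _ _ wL, ← twoMap_toSingle 0 _ dT _ _ wT,
    Functor.map_comp, Functor.map_comp, Functor.map_comp, Functor.map_comp, ← hψ,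
    Category.assoc, reassoc_of% hφ, ← Category.assoc, ← Category.assoc,
    ← Functor.map_comp, ← Functor.map_comp, twoMap_toSingle, e1,
    ← twoMap_toSingle 0 _ dT _ _ wT, Functor.map_comp, Functor.map_comp]
end

section
/- Let C be a triangulated category with a weight structure w, let B be a set of objects of C_{[0,1]}, let 𝔻 be the triangulated subcategory of C generated by B, and let w_{C/𝔻} be the weight structure on C/𝔻 whose classes are the retract-closures in C/𝔻 of C_{w≤0} and C_{w≥0}. Then the heart of w_{C/𝔻} is the Karoubi-closure in C/𝔻 of the full subcategory H of C/𝔻 whose objects are those of C_{w=0}; that is, every object of (C/𝔻)_{w_{C/𝔻}=0} is a retract in C/𝔻 of an object of C_{w=0}, and every object of C_{w=0} lies in (C/𝔻)_{w_{C/𝔻}=0}. -/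
open CategoryTheory Limits Pretriangulated ZeroObject

universe v u v' u'

section TriangulatedPrelude

variable {C : Type u} [Category.{v} C] [HasZeroObject C] [HasShift C ℤ] [Preadditive C]
  [∀ n : ℤ, (shiftFunctor C n).Additive] [Pretriangulated C]

instance genSubcat_isTriangulated (B : Set C) : (genSubcat B).IsTriangulated where
  exists_zero := ⟨0, isZero_zero _, genSub.zero _ (isZero_zero _)⟩
  isStableUnderShiftBy n := ⟨fun X h => genSub.shift X n h⟩
  ext₂' T hT h₁ h₃ := ObjectProperty.le_isoClosure _ _ (genSub.ext₂ T hT h₁ h₃)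

end TriangulatedPrelude

section WeightStructurePrelude

variable (C : Type u) [Category.{v} C] [HasZeroObject C] [HasShift C ℤ] [Preadditive C]
  [∀ n : ℤ, (shiftFunctor C n).Additive] [Pretriangulated C]

/-- A weight structure on a (pre)triangulated category `C` (homological convention):
two retract-closed classes of objects `LE = C_{w≤0}` and `GE = C_{w≥0}` such that
`C_{w≤0} ⊆ C_{w≤0}[1]`, `C_{w≥0}[1] ⊆ C_{w≥0}`, `Hom(C_{w≤0}, C_{w≥0}[1]) = 0`, and every
object `M` admits a weight decomposition `X ⟶ M ⟶ Y ⟶ X[1]` with `X ∈ C_{w≤0}`,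
`Y ∈ C_{w≥0}[1]`. -/
structure WeightStructure where
  /-- the class `C_{w≤0}` -/
  LE : Set C
  /-- the class `C_{w≥0}` -/
  GE : Set C
  retract_LE : ∀ ⦃X Y : C⦄, Y ∈ LE → ∀ (i : X ⟶ Y) (r : Y ⟶ X), i ≫ r = 𝟙 X → X ∈ LE
  retract_GE : ∀ ⦃X Y : C⦄, Y ∈ GE → ∀ (i : X ⟶ Y) (r : Y ⟶ X), i ≫ r = 𝟙 X → X ∈ GE
  shift_LE : ∀ X ∈ LE, X⟦(-1 : ℤ)⟧ ∈ LE
  shift_GE : ∀ X ∈ GE, X⟦(1 : ℤ)⟧ ∈ GE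
  orthogonality : ∀ X ∈ LE, ∀ Y ∈ GE, ∀ f : X ⟶ (Y⟦(1 : ℤ)⟧), f = 0
  decomposition : ∀ M : C, ∃ (X Y : C) (a : X ⟶ M) (b : M ⟶ Y) (c : Y ⟶ X⟦(1 : ℤ)⟧),
    (Triangle.mk a b c ∈ distTriang C) ∧ X ∈ LE ∧ Y⟦(-1 : ℤ)⟧ ∈ GE

variable {C}

/-- The class `C_{w=0} = C_{w≤0} ∩ C_{w≥0}` of objects of the heart. -/
def WeightStructure.heart (w : WeightStructure C) : Set C := w.LE ∩ w.GE

/-- The class `C_{[0,1]} = C_{w≥0} ∩ C_{w≤1}`. -/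
def WeightStructure.zeroOne (w : WeightStructure C) : Set C :=
  {X | X ∈ w.GE ∧ X⟦(-1 : ℤ)⟧ ∈ w.LE}

end WeightStructurePrelude

section Helpers

variable {C : Type u} [Category.{v} C] [HasZeroObject C] [HasShift C ℤ] [Preadditive C]
  [∀ n : ℤ, (shiftFunctor C n).Additive] [Pretriangulated C]

lemma genSub_iso {B : Set C} {X Y : C} (e : X ≅ Y) (h : genSub B X) : genSub B Y := by
  refine genSub.ext₂ (Triangle.mk e.hom (0 : Y ⟶ (0 : C)) 0) ?_ h (genSub.zero _ (isZero_zero _))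
  rw [Triangle.distinguished_iff_of_isZero₃ _ (isZero_zero _)]
  change IsIso e.hom
  infer_instance

namespace WeightStructure

variable (w : WeightStructure C)

lemma LE_iso {X Y : C} (e : X ≅ Y) (h : X ∈ w.LE) : Y ∈ w.LE :=
  w.retract_LE h e.inv e.hom e.inv_hom_id

lemma GE_iso {X Y : C} (e : X ≅ Y) (h : X ∈ w.GE) : Y ∈ w.GE :=
  w.retract_GE h e.inv e.hom e.inv_hom_id

lemma orth' {X Y : C} (hX : X ∈ w.LE) (hY : Y⟦(-1 : ℤ)⟧ ∈ w.GE) (f : X ⟶ Y) : f = 0 := by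
  have := w.orthogonality X hX _ hY (f ≫ (shiftNegShift Y (1 : ℤ)).inv)
  rw [← cancel_mono (shiftNegShift Y (1 : ℤ)).inv, this, zero_comp]

lemma mem_LE {M : C} (h : ∀ Y ∈ w.GE, ∀ f : M ⟶ Y⟦(1 : ℤ)⟧, f = 0) : M ∈ w.LE := by
  obtain ⟨X, Y, a, b, c, hT, hX, hY⟩ := w.decomposition M
  have hb : b = 0 := by
    have := h _ hY (b ≫ (shiftNegShift Y (1 : ℤ)).inv)
    rw [← cancel_mono (shiftNegShift Y (1 : ℤ)).inv, this, zero_comp]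
  obtain ⟨g, hg⟩ := Triangle.coyoneda_exact₂ _ hT (𝟙 M) ((Category.id_comp b).trans hb)
  exact w.retract_LE hX g a hg.symm

lemma mem_GE {M : C} (h : ∀ X ∈ w.LE, ∀ f : X ⟶ M⟦(1 : ℤ)⟧, f = 0) : M ∈ w.GE := by
  obtain ⟨X, Y, a, b, c, hT, hX, hY⟩ := w.decomposition (M⟦(1 : ℤ)⟧)
  have ha : a = 0 := h _ hX a
  obtain ⟨(g : Y ⟶ M⟦(1 : ℤ)⟧), hg⟩ := Triangle.yoneda_exact₂ _ hT (𝟙 (M⟦(1 : ℤ)⟧)) ((Category.comp_id a).trans ha)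
  refine w.GE_iso (shiftShiftNeg M (1 : ℤ)) (w.retract_GE hY (b⟦(-1 : ℤ)⟧') (g⟦(-1 : ℤ)⟧') ?_)
  have hg' : b ≫ g = 𝟙 _ := hg.symm
  rw [← Functor.map_comp, hg', CategoryTheory.Functor.map_id]

lemma LE_ext (T : Triangle C) (hT : T ∈ distTriang C) (h₁ : T.obj₁ ∈ w.LE)
    (h₃ : T.obj₃ ∈ w.LE) : T.obj₂ ∈ w.LE := by
  refine w.mem_LE fun Y hY f => ?_
  obtain ⟨g, hg⟩ := Triangle.yoneda_exact₂ _ hT f (w.orthogonality _ h₁ _ hY _)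
  rw [hg, w.orthogonality _ h₃ _ hY g, comp_zero]

lemma GE_ext (T : Triangle C) (hT : T ∈ distTriang C) (h₁ : T.obj₁ ∈ w.GE)
    (h₃ : T.obj₃ ∈ w.GE) : T.obj₂ ∈ w.GE := by
  refine w.mem_GE fun X hX f => ?_
  obtain ⟨g, hg⟩ := Triangle.coyoneda_exact₂ _ (Triangle.shift_distinguished _ hT 1) f
    (w.orthogonality X hX _ h₃ _)
  have hg0 : g = (0 : X ⟶ T.obj₁⟦(1 : ℤ)⟧) := w.orthogonality X hX _ h₁ g
  rw [hg, hg0]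
  exact zero_comp

lemma zero_LE {X : C} (h : IsZero X) : X ∈ w.LE := w.mem_LE fun _ _ _ => h.eq_of_src _ _

lemma zero_GE {X : C} (h : IsZero X) : X ∈ w.GE :=
  w.mem_GE fun _ _ _ => ((shiftFunctor C (1 : ℤ)).map_isZero h).eq_of_tgt _ _

lemma GE_shift (n : ℕ) {X : C} (h : X ∈ w.GE) : X⟦(n : ℤ)⟧ ∈ w.GE := by
  induction n with
  | zero => exact w.GE_iso ((shiftFunctorZero' C _ (by simp)).symm.app X) h
  | succ n ih =>
    exact w.GE_iso ((shiftFunctorAdd' C (n : ℤ) 1 _ (by simp)).symm.app X) (w.shift_GE _ ih)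

lemma LE_shift (n : ℕ) {X : C} (h : X ∈ w.LE) : X⟦(-n : ℤ)⟧ ∈ w.LE := by
  induction n with
  | zero => exact w.LE_iso ((shiftFunctorZero' C _ (by simp)).symm.app X) h
  | succ n ih =>
    exact w.LE_iso ((shiftFunctorAdd' C (-n : ℤ) (-1) _ (by push_cast; ring)).symm.app X)
      (w.shift_LE _ ih)

/-- `M` has a decomposition with left part in `LE` and generated by `B`, right part in `GE`. -/
def Dec (B : Set C) (M : C) : Prop :=
  ∃ (X Y : C) (a : X ⟶ M) (b : M ⟶ Y) (c : Y ⟶ X⟦(1 : ℤ)⟧),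
    (Triangle.mk a b c ∈ distTriang C) ∧ X ∈ w.LE ∧ genSub B X ∧ Y ∈ w.GE

lemma Dec.iso {w : WeightStructure C} {B : Set C} {M N : C} (e : M ≅ N) (h : w.Dec B M) :
    w.Dec B N := by
  obtain ⟨X, Y, a, b, c, hT, hX, hX', hY⟩ := h
  refine ⟨X, Y, a ≫ e.hom, e.inv ≫ b, c, isomorphic_distinguished _ hT _ ?_, hX, hX', hY⟩
  refine Triangle.isoMk _ _ (Iso.refl X) e.symm (Iso.refl Y) ?_ ?_ ?_
  · change (a ≫ e.hom) ≫ e.inv = 𝟙 X ≫ a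
    simp
  · change (e.inv ≫ b) ≫ 𝟙 Y = e.inv ≫ b
    simp
  · change c ≫ (𝟙 X)⟦(1 : ℤ)⟧' = 𝟙 Y ≫ c
    simp

lemma Dec.of_LE {w : WeightStructure C} {B : Set C} {M : C} (h : M ∈ w.LE) (h' : genSub B M) :
    w.Dec B M :=
  ⟨M, 0, 𝟙 M, 0, 0, contractible_distinguished M, h, h', w.zero_GE (isZero_zero _)⟩

lemma Dec.of_GE {w : WeightStructure C} {B : Set C} {M : C} (h : M ∈ w.GE) : w.Dec B M :=
  ⟨0, M, 0, 𝟙 M, 0, contractible_distinguished₁ M, w.zero_LE (isZero_zero _),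
    genSub.zero _ (isZero_zero _), h⟩

variable [IsTriangulated C]

lemma lift_dec {A Z D X Y : C} {s : A ⟶ Z} {p : Z ⟶ D} {d : D ⟶ A⟦(1 : ℤ)⟧}
    (hT : Triangle.mk s p d ∈ distTriang C) {x : X ⟶ D} {y : D ⟶ Y} {z : Y ⟶ X⟦(1 : ℤ)⟧}
    (hT' : Triangle.mk x y z ∈ distTriang C) (hA : A ∈ w.GE) (hX : X ∈ w.LE) (hY : Y ∈ w.GE) :
    ∃ (Z' : C) (a : X ⟶ Z) (b : Z ⟶ Z') (c : Z' ⟶ X⟦(1 : ℤ)⟧),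
      (Triangle.mk a b c ∈ distTriang C) ∧ Z' ∈ w.GE := by
  obtain ⟨a, ha⟩ := Triangle.coyoneda_exact₃ _ hT x (w.orthogonality X hX A hA _)
  obtain ⟨Z', b, c, h⟩ := distinguished_cocone_triangle a
  refine ⟨Z', a, b, c, h, ?_⟩
  have ha' : a ≫ p = x := ha.symm
  have o := Triangulated.someOctahedron ha' h (rot_of_distTriang _ hT) hT'
  exact w.GE_ext _ (inv_rot_of_distTriang _ o.mem) (w.GE_iso (shiftShiftNeg A (1 : ℤ)).symm hA) hY

lemma Dec.ext {w : WeightStructure C} {B : Set C} {T₁ M T₃ : C} {s : T₁ ⟶ M} {p : M ⟶ T₃}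
    {d : T₃ ⟶ T₁⟦(1 : ℤ)⟧} (hT : Triangle.mk s p d ∈ distTriang C)
    (h₁ : w.Dec B T₁) (h₃ : w.Dec B T₃) : w.Dec B M := by
  obtain ⟨X₁, Y₁, a₁, b₁, c₁, hT₁, hX₁, hX₁', hY₁⟩ := h₁
  obtain ⟨X₃, Y₃, a₃, b₃, c₃, hT₃, hX₃, hX₃', hY₃⟩ := h₃
  obtain ⟨E, b, c, hE⟩ := distinguished_cocone_triangle (a₁ ≫ s)
  have o := Triangulated.someOctahedron rfl hT₁ hT hE
  obtain ⟨E', a', b', c', hE', hE''⟩ := w.lift_dec o.mem hT₃ hY₁ hX₃ hY₃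
  obtain ⟨F, i, j, hF⟩ := distinguished_cocone_triangle₁ (b ≫ b')
  have o' := Triangulated.someOctahedron' rfl hE hE' hF
  exact ⟨F, E', i, _, j, hF, w.LE_ext _ o'.mem hX₁ hX₃, genSub.ext₂ _ o'.mem hX₁' hX₃', hE''⟩

lemma dec_of_genSub {B : Set C} (hB : B ⊆ w.zeroOne) {M : C} (h : genSub B M) (m : ℤ) :
    w.Dec B (M⟦m⟧) := by
  induction h generalizing m with
  | of X hX =>
    obtain ⟨h₀, h₁⟩ := hB hX
    by_cases hm : 0 ≤ m
    · obtain ⟨n, rfl⟩ := Int.eq_ofNat_of_zero_le hm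
      exact Dec.of_GE (w.GE_shift n h₀)
    · obtain ⟨n, hn⟩ := Int.eq_ofNat_of_zero_le (a := -1 - m) (by omega)
      exact Dec.of_LE (w.LE_iso ((shiftFunctorAdd' C (-1) (-n : ℤ) m (by omega)).symm.app X)
        (w.LE_shift n h₁)) (genSub.shift _ _ (genSub.of _ hX))
  | zero X hX => exact Dec.of_GE (w.zero_GE ((shiftFunctor C m).map_isZero hX))
  | shift X n hX ih => exact (ih (n + m)).iso ((shiftFunctorAdd C n m).app X)
  | ext₂ T hT h₁ h₃ ih₁ ih₃ => exact Dec.ext (Triangle.shift_distinguished _ hT m) (ih₁ m) (ih₃ m)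

lemma factor_heart {Y Z : C} (hY : Y ∈ w.LE) (hZ : Z ∈ w.GE) (f : Y ⟶ Z) :
    ∃ H ∈ w.heart, ∃ (a : Y ⟶ H) (b : H ⟶ Z), a ≫ b = f := by
  obtain ⟨X, W, a, b, c, hT, hX, hW⟩ := w.decomposition Z
  obtain ⟨g, hg⟩ := Triangle.coyoneda_exact₂ _ hT f (w.orth' hY hW _)
  exact ⟨X, ⟨hX, w.GE_ext _ (inv_rot_of_distTriang _ hT) hW hZ⟩, g, a, hg.symm⟩

lemma factor_quot {B : Set C} (hB : B ⊆ w.zeroOne) {Y Y' : C} (hY : Y ∈ w.LE) (hY' : Y' ∈ w.GE)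
    (f : (genSubcat B).trW.Q.obj Y ⟶ (genSubcat B).trW.Q.obj Y') :
    ∃ H ∈ w.heart, ∃ (a : (genSubcat B).trW.Q.obj Y ⟶ (genSubcat B).trW.Q.obj H)
      (b : (genSubcat B).trW.Q.obj H ⟶ (genSubcat B).trW.Q.obj Y'), a ≫ b = f := by
  obtain ⟨φ, hφ⟩ := Localization.exists_leftFraction (genSubcat B).trW.Q (genSubcat B).trW f
  have e : f ≫ (genSubcat B).trW.Q.map φ.s = (genSubcat B).trW.Q.map φ.f := by
    rw [hφ, MorphismProperty.LeftFraction.map_comp_map_s]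
  obtain ⟨D, p, d, hT, hD⟩ := φ.hs
  obtain ⟨X, V, x, y, z, hT', hX, hX', hV⟩ :=
    (w.dec_of_genSub hB hD 0).iso ((shiftFunctorZero C ℤ).app D)
  obtain ⟨Z', a, b, c, hT'', hZ'⟩ := w.lift_dec hT hT' hY' hX hV
  have hb : (genSubcat B).trW b := ObjectProperty.trW.mk' _ hT'' hX'
  obtain ⟨H, hH, i, j, hij⟩ := w.factor_heart hY hZ' (φ.f ≫ b)
  have := Localization.inverts (genSubcat B).trW.Q (genSubcat B).trW b hb
  have := Localization.inverts (genSubcat B).trW.Q (genSubcat B).trW φ.s φ.hs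
  refine ⟨H, hH, (genSubcat B).trW.Q.map i, (genSubcat B).trW.Q.map j ≫
    inv ((genSubcat B).trW.Q.map b) ≫ inv ((genSubcat B).trW.Q.map φ.s), ?_⟩
  rw [← Functor.map_comp_assoc, hij, Functor.map_comp, Category.assoc, IsIso.hom_inv_id_assoc,
    ← e, Category.assoc, IsIso.hom_inv_id, Category.comp_id]

end WeightStructure

end Helpers

/-- Theorem: the heart of the weight structure induced on the Verdier quotient `C/𝔻`
(whose classes are the retract-closures of `C_{w≤0}` and `C_{w≥0}`) is the
Karoubi-closure of the image of the heart of `w`: every object of the new heart is a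
retract of an object coming from `C_{w=0}`, and every object of `C_{w=0}` lies in the
new heart. -/
theorem statement18 {C : Type u} [Category.{v} C] [HasZeroObject C] [HasShift C ℤ]
    [Preadditive C] [∀ n : ℤ, (shiftFunctor C n).Additive] [Pretriangulated C]
    [IsTriangulated C] (w : WeightStructure C) (B : Set C) (hB : B ⊆ w.zeroOne) :
    (∀ X : (genSubcat B).trW.Localization,
      X ∈ {X | ∃ Y ∈ w.LE, ∃ (i : X ⟶ (genSubcat B).trW.Q.obj Y)
          (r : (genSubcat B).trW.Q.obj Y ⟶ X), i ≫ r = 𝟙 X} →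
      X ∈ {X | ∃ Y ∈ w.GE, ∃ (i : X ⟶ (genSubcat B).trW.Q.obj Y)
          (r : (genSubcat B).trW.Q.obj Y ⟶ X), i ≫ r = 𝟙 X} →
      ∃ Y ∈ w.heart, ∃ (i : X ⟶ (genSubcat B).trW.Q.obj Y)
        (r : (genSubcat B).trW.Q.obj Y ⟶ X), i ≫ r = 𝟙 X) ∧
    (∀ Y ∈ w.heart,
      (genSubcat B).trW.Q.obj Y ∈ {X | ∃ Y' ∈ w.LE, ∃ (i : X ⟶ (genSubcat B).trW.Q.obj Y')
          (r : (genSubcat B).trW.Q.obj Y' ⟶ X), i ≫ r = 𝟙 X} ∧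
      (genSubcat B).trW.Q.obj Y ∈ {X | ∃ Y' ∈ w.GE, ∃ (i : X ⟶ (genSubcat B).trW.Q.obj Y')
          (r : (genSubcat B).trW.Q.obj Y' ⟶ X), i ≫ r = 𝟙 X}) := by
  refine ⟨?_, fun Y hY => ⟨⟨Y, hY.1, 𝟙 _, 𝟙 _, by simp⟩, ⟨Y, hY.2, 𝟙 _, 𝟙 _, by simp⟩⟩⟩
  rintro X ⟨Y, hY, i, r, h⟩ ⟨Y', hY', i', r', h'⟩
  obtain ⟨H, hH, a, b, hab⟩ := w.factor_quot hB hY hY' (r ≫ i')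
  refine ⟨H, hH, i ≫ a, b ≫ r', ?_⟩
  have : (i ≫ a) ≫ b ≫ r' = i ≫ (a ≫ b) ≫ r' := by simp only [Category.assoc]
  rw [this, hab, Category.assoc, h', Category.comp_id, h]
end
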